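/- arXiv:1004.2079 — 2 statements merged into one kernel-verified Lean document; each statement's English description precedes it below -/
import Mathlib

section
/- Let G be an exchange network with n nodes for which the LP relaxation of maximum weight matching admits a unique optimum, and this optimum is integral, corresponding to matching M*, with LP gap g > 0. Let α be an ε-fixed point of the natural dynamics for some ε < g/(6n²), with earnings vector γ. Then α induces the matching M*, and (M*, γ) is a 6ε-Nash bargaining solution. Conversely, for any ε > 0, every ε-Nash bargaining solution (M, γ_NB) has M = M*. -/
namespace EN

open Finset

variable {V : Type*}

/-- The nonnegative part `(x)₊ = max (x, 0)`. -/
noncomputable def pos (x : ℝ) : ℝ := max x 0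

variable [Fintype V] [DecidableEq V]

/-- The maximum of `f` over a finite set of vertices (`0` over the empty set). -/
noncomputable def fmax (s : Finset V) (f : V → ℝ) : ℝ := ⨆ k ∈ s, f k

/-- The offer from `i` to `j` given messages `α` and weights `w`:
`m_{i→j} = (w_{ij} − α_{i\j})₊ − (1/2) (w_{ij} − α_{i\j} − α_{j\i})₊`. -/
noncomputable def offer (w α : V → V → ℝ) (i j : V) : ℝ :=
  pos (w i j - α i j) - (1 / 2) * pos (w i j - α i j - α j i)

/-- The update operator `T` of the natural dynamics:
`(Tα)_{i\j} = max_{k ∈ ∂i \ j} m_{k→i}`. -/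
noncomputable def upd (G : SimpleGraph V) [DecidableRel G.Adj] (w α : V → V → ℝ)
    (i j : V) : ℝ :=
  fmax ((G.neighborFinset i).erase j) fun k => offer w α k i

/-- The earnings estimate `γ_i = max_{k ∈ ∂i} m_{k→i}`. -/
noncomputable def earn (G : SimpleGraph V) [DecidableRel G.Adj] (w α : V → V → ℝ)
    (i : V) : ℝ :=
  fmax (G.neighborFinset i) fun k => offer w α k i

/-- Exchange network weights: symmetric and positive on every edge. -/
def GoodW (G : SimpleGraph V) (w : V → V → ℝ) : Prop :=
  (∀ i j, w i j = w j i) ∧ ∀ i j, G.Adj i j → 0 < w i j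

/-- A valid message vector: nonnegative on all directed edges. -/
def ValidMsg (G : SimpleGraph V) (α : V → V → ℝ) : Prop :=
  ∀ i j, G.Adj i j → 0 ≤ α i j

/-- Fixed point of the natural-dynamics update operator. -/
def IsFixedPt (G : SimpleGraph V) [DecidableRel G.Adj] (w α : V → V → ℝ) : Prop :=
  ∀ i j, G.Adj i j → upd G w α i j = α i j

/-- `ε`-fixed point. -/
def IsEpsFixedPt (G : SimpleGraph V) [DecidableRel G.Adj] (w α : V → V → ℝ) (ε : ℝ) : Prop :=
  ∀ i j, G.Adj i j → |α i j - upd G w α i j| ≤ ε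

/-- The natural dynamics with damping factor `κ`: `α^{t+1} = (1−κ) α^t + κ T α^t`. -/
noncomputable def dyn (G : SimpleGraph V) [DecidableRel G.Adj] (w : V → V → ℝ) (κ : ℝ)
    (α0 : V → V → ℝ) : ℕ → V → V → ℝ
  | 0 => α0
  | t + 1 => fun i j =>
      (1 - κ) * dyn G w κ α0 t i j + κ * upd G w (dyn G w κ α0 t) i j

/-- Sup norm over directed edges. -/
noncomputable def msgSup (G : SimpleGraph V) [DecidableRel G.Adj] (f : V → V → ℝ) : ℝ :=
  ⨆ p : V × V, if G.Adj p.1 p.2 then |f p.1 p.2| else 0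

/-- `M` is a matching of `G`: a symmetric subrelation of adjacency pairing each node
with at most one partner. -/
structure IsMatching (G : SimpleGraph V) (M : V → V → Prop) : Prop where
  subset : ∀ i j, M i j → G.Adj i j
  symm : ∀ i j, M i j → M j i
  unique : ∀ i j k, M i j → M i k → j = k

/-- `(M, γ)` is a trade outcome. -/
def IsOutcome (G : SimpleGraph V) (w : V → V → ℝ) (M : V → V → Prop) (γ : V → ℝ) : Prop :=
  IsMatching G M ∧ (∀ i, 0 ≤ γ i) ∧ (∀ i j, M i j → γ i + γ j = w i j) ∧
    ∀ i, (∀ j, ¬M i j) → γ i = 0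

/-- Stability of an outcome. -/
def Stable (G : SimpleGraph V) (w : V → V → ℝ) (M : V → V → Prop) (γ : V → ℝ) : Prop :=
  ∀ i j, G.Adj i j → ¬M i j → w i j ≤ γ i + γ j

/-- The best alternative of `i` excluding `j`: `max_{k ∈ ∂i \ j} (w_{ik} − γ_k)₊`. -/
noncomputable def bestAlt (G : SimpleGraph V) [DecidableRel G.Adj] (w : V → V → ℝ)
    (γ : V → ℝ) (i j : V) : ℝ :=
  fmax ((G.neighborFinset i).erase j) fun k => pos (w i k - γ k)

/-- Balance of an outcome. -/
def Balanced (G : SimpleGraph V) [DecidableRel G.Adj] (w : V → V → ℝ) (M : V → V → Prop)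
    (γ : V → ℝ) : Prop :=
  ∀ i j, M i j → γ i - bestAlt G w γ i j = γ j - bestAlt G w γ j i

/-- Nash bargaining solution: a stable and balanced trade outcome. -/
def IsNBSolution (G : SimpleGraph V) [DecidableRel G.Adj] (w : V → V → ℝ)
    (M : V → V → Prop) (γ : V → ℝ) : Prop :=
  IsOutcome G w M γ ∧ Stable G w M γ ∧ Balanced G w M γ

/-- `ε`-balance. -/
def EpsBalanced (G : SimpleGraph V) [DecidableRel G.Adj] (w : V → V → ℝ)
    (M : V → V → Prop) (γ : V → ℝ) (ε : ℝ) : Prop :=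
  ∀ i j, M i j → |(γ i - bestAlt G w γ i j) - (γ j - bestAlt G w γ j i)| ≤ ε

/-- `ε`-Nash bargaining solution. -/
def IsEpsNB (G : SimpleGraph V) [DecidableRel G.Adj] (w : V → V → ℝ)
    (M : V → V → Prop) (γ : V → ℝ) (ε : ℝ) : Prop :=
  IsOutcome G w M γ ∧ Stable G w M γ ∧ EpsBalanced G w M γ ε

/-- Feasible point of the LP relaxation of maximum weight matching. -/
def LPFeasible (G : SimpleGraph V) [DecidableRel G.Adj] (x : V → V → ℝ) : Prop :=
  (∀ i j, x i j = x j i) ∧ (∀ i j, 0 ≤ x i j) ∧ (∀ i j, ¬G.Adj i j → x i j = 0) ∧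
    ∀ i, ∑ j ∈ G.neighborFinset i, x i j ≤ 1

/-- LP objective `Σ_{(i,j)∈E} w_{ij} x_{ij}` (each undirected edge counted once). -/
noncomputable def LPval (G : SimpleGraph V) [DecidableRel G.Adj] (w x : V → V → ℝ) : ℝ :=
  (1 / 2) * ∑ i, ∑ j ∈ G.neighborFinset i, w i j * x i j

/-- Optimal point of the LP relaxation of maximum weight matching. -/
def LPOptimal (G : SimpleGraph V) [DecidableRel G.Adj] (w x : V → V → ℝ) : Prop :=
  LPFeasible G x ∧ ∀ y, LPFeasible G y → LPval G w y ≤ LPval G w x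

def Integral (x : V → V → ℝ) : Prop := ∀ i j, x i j = 0 ∨ x i j = 1

def HalfIntegral (x : V → V → ℝ) : Prop := ∀ i j, x i j = 0 ∨ x i j = 1 / 2 ∨ x i j = 1

open Classical in
/-- The LP point associated to a matching. -/
noncomputable def mInd (M : V → V → Prop) (i j : V) : ℝ := if M i j then 1 else 0

/-- The state with offers `m` induces the matching `M`: every node receiving a positive
offer is matched and receives its unique best offer from its partner, and every node
with zero earnings is unmatched. -/
def Induces (G : SimpleGraph V) [DecidableRel G.Adj] (m : V → V → ℝ)
    (M : V → V → Prop) : Prop :=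
  IsMatching G M ∧
    (∀ i, (∃ k, G.Adj i k ∧ 0 < m k i) →
      ∃ j, M i j ∧ ∀ k, G.Adj i k → k ≠ j → m k i < m j i) ∧
    ∀ i, (fmax (G.neighborFinset i) fun k => m k i) = 0 → ∀ j, ¬M i j

/-- Feasibility for the dual LP. -/
def DualFeasible (G : SimpleGraph V) (w : V → V → ℝ) (y : V → ℝ) : Prop :=
  (∀ i, 0 ≤ y i) ∧ ∀ i j, G.Adj i j → w i j ≤ y i + y j

/-- Optimality for the dual LP. -/
def DualOptimal (G : SimpleGraph V) (w : V → V → ℝ) (y : V → ℝ) : Prop :=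
  DualFeasible G w y ∧ ∀ z, DualFeasible G w z → ∑ i, y i ≤ ∑ i, z i

/-- The unmatched balance property at every edge. -/
def UnmatchedBalance (G : SimpleGraph V) [DecidableRel G.Adj] (w : V → V → ℝ)
    (y : V → ℝ) : Prop :=
  ∀ i j, G.Adj i j → y i - bestAlt G w y i j = y j - bestAlt G w y j i

/-! ### Unequal division -/

/-- Valid split fractions: `r_{ij} ∈ (0,1)` with `r_{ij} + r_{ji} = 1` on every edge. -/
def GoodR (G : SimpleGraph V) (r : V → V → ℝ) : Prop :=
  ∀ i j, G.Adj i j → 0 < r i j ∧ r i j < 1 ∧ r i j + r j i = 1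

/-- The UD offer from `i` to `j`. -/
noncomputable def offerUD (w r α : V → V → ℝ) (i j : V) : ℝ :=
  pos (w i j - α i j) - r i j * pos (w i j - α i j - α j i)

/-- The UD update operator. -/
noncomputable def updUD (G : SimpleGraph V) [DecidableRel G.Adj] (w r α : V → V → ℝ)
    (i j : V) : ℝ :=
  fmax ((G.neighborFinset i).erase j) fun k => offerUD w r α k i

/-- The UD earnings estimate. -/
noncomputable def earnUD (G : SimpleGraph V) [DecidableRel G.Adj] (w r α : V → V → ℝ)
    (i : V) : ℝ :=
  fmax (G.neighborFinset i) fun k => offerUD w r α k i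

/-- Fixed point of the UD update operator. -/
def IsFixedPtUD (G : SimpleGraph V) [DecidableRel G.Adj] (w r α : V → V → ℝ) : Prop :=
  ∀ i j, G.Adj i j → updUD G w r α i j = α i j

/-- Correct division. -/
def CorrectDiv (G : SimpleGraph V) [DecidableRel G.Adj] (w r : V → V → ℝ)
    (M : V → V → Prop) (γ : V → ℝ) : Prop :=
  ∀ i j, M i j →
    (1 / r i j) * (γ i - bestAlt G w γ i j) = (1 / r j i) * (γ j - bestAlt G w γ j i)

/-- UD solution: a stable trade outcome satisfying correct division. -/
def IsUDSolution (G : SimpleGraph V) [DecidableRel G.Adj] (w r : V → V → ℝ)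
    (M : V → V → Prop) (γ : V → ℝ) : Prop :=
  IsOutcome G w M γ ∧ Stable G w M γ ∧ CorrectDiv G w r M γ

/-- Edge surplus. -/
noncomputable def surp (G : SimpleGraph V) [DecidableRel G.Adj] (w : V → V → ℝ)
    (γ : V → ℝ) (i j : V) : ℝ :=
  w i j - bestAlt G w γ i j - bestAlt G w γ j i

open Classical in
/-- The rebalanced allocation `γ^reb`. -/
noncomputable def reb (G : SimpleGraph V) [DecidableRel G.Adj] (w r : V → V → ℝ)
    (M : V → V → Prop) (γ : V → ℝ) (i : V) : ℝ :=
  if h : ∃ j, M i j then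
    bestAlt G w γ i h.choose + r i h.choose * surp G w γ i h.choose
  else 0

/-- The Edge Rebalancing iteration `γ^{t+1} = κ γ^reb(γ^t) + (1−κ) γ^t`. -/
noncomputable def rebIter (G : SimpleGraph V) [DecidableRel G.Adj] (w r : V → V → ℝ)
    (M : V → V → Prop) (κ : ℝ) (γ0 : V → ℝ) : ℕ → V → ℝ
  | 0 => γ0
  | t + 1 => fun i =>
      κ * reb G w r M (rebIter G w r M κ γ0 t) i + (1 - κ) * rebIter G w r M κ γ0 t i

/-! ### Helper lemmas -/

theorem fmax_eq (s : Finset V) (f : V → ℝ) : fmax s f = ⨆ k, if k ∈ s then f k else 0 := by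
  unfold fmax
  congr 1
  funext k
  by_cases h : k ∈ s
  · simp [h]
  · simp [h]

theorem le_fmax {s : Finset V} {f : V → ℝ} {k : V} (hk : k ∈ s) : f k ≤ fmax s f := by
  rw [fmax_eq]
  have := le_ciSup (f := fun k => if k ∈ s then f k else 0) (Set.finite_range _).bddAbove k
  simpa [hk] using this

theorem fmax_le {s : Finset V} {f : V → ℝ} {B : ℝ} (hB : 0 ≤ B) (h : ∀ k ∈ s, f k ≤ B) :
    fmax s f ≤ B := by
  rw [fmax_eq]
  refine Real.iSup_le (fun k => ?_) hB
  split_ifs with hk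
  · exact h k hk
  · exact hB

theorem fmax_nonneg {s : Finset V} {f : V → ℝ} (h : ∀ k ∈ s, 0 ≤ f k) : 0 ≤ fmax s f := by
  rw [fmax_eq]
  refine Real.iSup_nonneg (fun k => ?_)
  split_ifs with hk
  · exact h k hk
  · exact le_rfl

theorem exists_fmax {s : Finset V} {f : V → ℝ} (h : 0 < fmax s f) : ∃ k ∈ s, f k = fmax s f := by
  have hne : Nonempty V := by
    by_contra hne
    rw [not_nonempty_iff] at hne
    rw [fmax_eq, Real.iSup_of_isEmpty] at h
    exact lt_irrefl _ h
  obtain ⟨k, hk⟩ := exists_eq_ciSup_of_finite (f := fun k => if k ∈ s then f k else 0)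
  rw [← fmax_eq] at hk
  by_cases hs : k ∈ s
  · exact ⟨k, hs, by simpa [hs] using hk⟩
  · simp only [hs, if_false] at hk
    linarith

/-- weight of a path -/
def pathWt (C : V → V → ℝ) : V → List V → ℝ
  | _, [] => 0
  | i, j :: l => C i j + pathWt C j l

theorem pathWt_append (C : V → V → ℝ) (i a : V) (l1 l2 : List V) :
    pathWt C i (l1 ++ a :: l2) = pathWt C i (l1 ++ [a]) + pathWt C a l2 := by
  induction l1 generalizing i with
  | nil => simp [pathWt]
  | cons b l ih => simp only [List.cons_append, pathWt, ih]; ring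

theorem exists_perm_path (C : V → V → ℝ) (hC : ∀ i, C i i = 0) (l : List V) :
    ∀ i, (i :: l).Nodup → ∃ π : Equiv.Perm V, (∀ x, x ∉ i :: l → π x = x) ∧
      ∃ z ∈ i :: l, π z = i ∧
        ∀ t, ∑ x, C x (π x) - C z i + C z t = pathWt C i (l ++ [t]) := by
  induction l with
  | nil =>
    intro i _
    refine ⟨1, by simp, i, by simp, by simp, fun t => ?_⟩
    simp [pathWt, hC]
  | cons j l ih =>
    intro i hn
    rw [List.nodup_cons] at hn
    obtain ⟨hi, hn⟩ := hn
    obtain ⟨π, hfix, z, hz, hzj, hsum⟩ := ih j hn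
    have hπi : π i = i := hfix i hi
    have hzi : z ≠ i := fun h => hi (h ▸ hz)
    have hji : j ≠ i := fun h => hi (by simp [h])
    refine ⟨Equiv.swap i j * π, ?_, z, List.mem_cons_of_mem _ hz, ?_, fun t => ?_⟩
    · intro x hx
      simp only [List.mem_cons, not_or] at hx
      have : π x = x := hfix x (by simp [hx])
      rw [Equiv.Perm.mul_apply, this, Equiv.swap_apply_of_ne_of_ne hx.1 hx.2.1]
    · simp [hzj]
    · have key : ∀ x, C x ((Equiv.swap i j * π) x) = C x (π x) + (if x = i then C i j else 0)
          + (if x = z then C z i - C z j else 0) := by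
        intro x
        rw [Equiv.Perm.mul_apply]
        by_cases hxi : x = i
        · subst hxi
          simp [hπi, hC, hzi.symm]
        · by_cases hxz : x = z
          · subst hxz
            simp [hzj, hxi]
          · have h1 : π x ≠ i := fun h => hxi (π.injective (h.trans hπi.symm))
            have h2 : π x ≠ j := fun h => hxz (π.injective (h.trans hzj.symm))
            simp [hxi, hxz, Equiv.swap_apply_of_ne_of_ne h1 h2]
      have := hsum t
      simp only [key, Finset.sum_add_distrib, Finset.sum_ite_eq', Finset.mem_univ, if_true,
        List.cons_append, pathWt]
      linarith

theorem exists_potential (C : V → V → ℝ) (hC : ∀ i, C i i = 0)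
    (hperm : ∀ π : Equiv.Perm V, ∑ x, C x (π x) ≤ 0) :
    ∃ u : V → ℝ, ∀ i j, C i j ≤ u i - u j := by
  classical
  have hcyc : ∀ i l, (i :: l).Nodup → pathWt C i (l ++ [i]) ≤ 0 := by
    intro i l hn
    obtain ⟨π, _, z, _, _, hs⟩ := exists_perm_path C hC l i hn
    have := hs i
    have := hperm π
    linarith
  have hmax : ∀ i, ∃ l : List V, (i :: l).Nodup ∧
      ∀ l', (i :: l').Nodup → pathWt C i l' ≤ pathWt C i l := by
    intro i
    have hfin : Set.Finite {l : List V | (i :: l).Nodup} := by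
      have : Set.Finite {l : List V | l.Nodup} :=
        Finite.of_fintype {l : List V // l.Nodup}
      exact this.subset fun l hl => (List.nodup_cons.1 hl).2
    obtain ⟨l, hl, hm⟩ := Set.exists_max_image _ (pathWt C i) hfin ⟨[], by simp⟩
    exact ⟨l, hl, hm⟩
  choose L hL hLm using hmax
  refine ⟨fun i => pathWt C i (L i), fun i j => ?_⟩
  by_cases hij : i = j
  · subst hij; simp [hC]
  by_cases hm : i ∈ L j
  · obtain ⟨l1, l2, hl⟩ := List.append_of_mem hm
    have hn := hL j
    rw [hl] at hn
    have hn' : (j :: l1 ++ i :: l2).Nodup := hn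
    rw [List.nodup_append] at hn'
    obtain ⟨hn1, hn2, hd⟩ := hn'
    have hc : pathWt C i ((j :: l1) ++ [i]) ≤ 0 := by
      apply hcyc
      rw [List.nodup_cons]
      exact ⟨fun h => hd i h i (by simp) rfl, hn1⟩
    have h2 := hLm i l2 hn2
    have h3 : pathWt C j (L j) = pathWt C j (l1 ++ [i]) + pathWt C i l2 := by
      rw [hl, pathWt_append]
    simp only [List.cons_append, pathWt] at hc
    linarith
  · have h2 := hLm i (j :: L j) (by
      rw [List.nodup_cons]
      exact ⟨by simp [hij, hm], hL j⟩)
    simp only [pathWt] at h2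
    linarith

section Offers

variable {G : SimpleGraph V} [DecidableRel G.Adj] {w α : V → V → ℝ} {ε : ℝ}

theorem offer_nonneg (hval : ValidMsg G α) {i j : V} (h : G.Adj i j) : 0 ≤ offer w α i j := by
  have h1 := hval i j h
  have h2 := hval j i h.symm
  unfold offer pos
  rcases max_cases (w i j - α i j) 0 with ⟨e, _⟩ | ⟨e, _⟩ <;>
  rcases max_cases (w i j - α i j - α j i) 0 with ⟨e', _⟩ | ⟨e', _⟩ <;>
  rw [e, e'] <;> linarith

/-- the two cases for an edge -/
theorem offer_cases (hw : GoodW G w) (hval : ValidMsg G α) {i j : V} (h : G.Adj i j) :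
    (offer w α i j + offer w α j i = w i j ∧ offer w α i j - α j i = offer w α j i - α i j ∧
      0 ≤ offer w α i j - α j i) ∨
    (w i j < α i j + α j i ∧
      offer w α i j = pos (w i j - α i j) ∧ offer w α j i = pos (w i j - α j i) ∧
      offer w α i j ≤ α j i ∧ offer w α j i ≤ α i j) := by
  have h1 := hval i j h
  have h2 := hval j i h.symm
  have hs := hw.1 j i
  unfold offer pos
  rw [hs]
  rcases le_or_gt (α i j + α j i) (w i j) with hS | hS
  · left
    rw [max_eq_left (by linarith : 0 ≤ w i j - α i j),
      max_eq_left (by linarith : 0 ≤ w i j - α j i),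
      max_eq_left (by linarith : 0 ≤ w i j - α i j - α j i),
      max_eq_left (by linarith : 0 ≤ w i j - α j i - α i j)]
    refine ⟨by ring, by ring, by linarith⟩
  · right
    rw [max_eq_right (by linarith : w i j - α i j - α j i ≤ 0),
      max_eq_right (by linarith : w i j - α j i - α i j ≤ 0)]
    simp only [mul_zero, sub_zero, true_and]
    exact ⟨hS, max_le (by linarith) h2, max_le (by linarith) h1⟩

theorem offer_le_earn {i k : V} (h : G.Adj i k) : offer w α k i ≤ earn G w α i :=
  le_fmax (f := fun k => offer w α k i) (by simpa using h)

theorem offer_le_upd {i j k : V} (h : G.Adj i k) (hk : k ≠ j) : offer w α k i ≤ upd G w α i j :=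
  le_fmax (f := fun k => offer w α k i) (by simpa [hk] using h)

theorem earn_nonneg (hval : ValidMsg G α) (i : V) : 0 ≤ earn G w α i :=
  fmax_nonneg fun k hk => offer_nonneg hval (by simpa using (G.mem_neighborFinset i k).1 hk |>.symm)

theorem upd_nonneg (hval : ValidMsg G α) (i j : V) : 0 ≤ upd G w α i j :=
  fmax_nonneg fun k hk => offer_nonneg hval
    (((G.mem_neighborFinset i k).1 (Finset.mem_of_mem_erase hk)).symm)

theorem upd_le_earn (hval : ValidMsg G α) (i j : V) : upd G w α i j ≤ earn G w α i :=
  fmax_le (earn_nonneg hval i) fun k hk =>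
    offer_le_earn ((G.mem_neighborFinset i k).1 (Finset.mem_of_mem_erase hk))

theorem earn_le (hval : ValidMsg G α) {i j : V} {B : ℝ} (h1 : offer w α j i ≤ B)
    (h2 : upd G w α i j ≤ B) : earn G w α i ≤ B := by
  refine fmax_le ((upd_nonneg hval i j).trans h2) fun k hk => ?_
  by_cases hkj : k = j
  · subst hkj; exact h1
  · exact (offer_le_upd ((G.mem_neighborFinset i k).1 hk) hkj).trans h2

theorem L1 (hw : GoodW G w) (hval : ValidMsg G α) (hε0 : 0 < ε) (hefp : IsEpsFixedPt G w α ε)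
    {k i : V} (h : G.Adj k i) (hp : 0 < offer w α k i) :
    earn G w α k ≤ w k i - offer w α k i + ε := by
  have e := abs_le.1 (hefp k i h)
  rcases offer_cases hw hval h with ⟨a, b, c⟩ | ⟨s, a, b, c, d⟩
  · exact earn_le hval (j := i) (by linarith) (by linarith)
  · have : offer w α k i = w k i - α k i := by
      rw [a] at hp ⊢
      unfold pos at hp ⊢
      rcases max_cases (w k i - α k i) 0 with ⟨e, _⟩ | ⟨e, _⟩
      · exact e
      · rw [e] at hp; exact absurd hp (lt_irrefl _)
    exact earn_le hval (j := i) (by linarith) (by linarith)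

/-- offers are almost at least the residual -/
theorem L2 (hw : GoodW G w) (hval : ValidMsg G α) (hε0 : 0 < ε) (hefp : IsEpsFixedPt G w α ε)
    {k i : V} (h : G.Adj k i) : w k i - earn G w α k - ε ≤ offer w α k i := by
  have e := abs_le.1 (hefp k i h)
  have u := upd_le_earn (w := w) hval k i
  rcases offer_cases hw hval h with ⟨a, b, c⟩ | ⟨s, a, b, c, d⟩
  · have := offer_le_earn (w := w) (α := α) h
    linarith
  · rw [a]
    have : w k i - α k i ≤ pos (w k i - α k i) := le_max_left _ _
    linarith

theorem L0 (hw : GoodW G w) (hval : ValidMsg G α) (hε0 : 0 < ε) (hefp : IsEpsFixedPt G w α ε)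
    {k i : V} (h : G.Adj k i) : w k i - ε ≤ earn G w α k + earn G w α i := by
  have := L2 hw hval hε0 hefp h
  have := offer_le_earn (w := w) (α := α) h.symm
  linarith

theorem L3 (hw : GoodW G w) (hval : ValidMsg G α) (hε0 : 0 < ε) (hefp : IsEpsFixedPt G w α ε)
    {k l : V} (h : G.Adj l k) (hp : 0 < offer w α l k) {δ : ℝ}
    (hδ : earn G w α k - δ ≤ offer w α l k) : earn G w α l - δ - 2 * ε ≤ offer w α k l := by
  have h1 := L1 hw hval hε0 hefp h hp
  have h2 := L2 hw hval hε0 hefp h.symm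
  have := hw.1 k l
  linarith

theorem prop_bad (hw : GoodW G w) (hval : ValidMsg G α) (hε0 : 0 < ε)
    (hefp : IsEpsFixedPt G w α ε) {j k : V} (h : G.Adj j k) {δ : ℝ} (hδ0 : 0 ≤ δ)
    (hδ : earn G w α j - δ ≤ upd G w α j k) : earn G w α k - δ - 2 * ε ≤ upd G w α k j := by
  have e := abs_le.1 (hefp j k h)
  have e' := abs_le.1 (hefp k j h.symm)
  have o := offer_le_earn (w := w) (α := α) h
  have : earn G w α k ≤ upd G w α k j + δ + 2 * ε := by
    rcases offer_cases hw hval h with ⟨a, b, c⟩ | ⟨s, a, b, c, d⟩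
    · exact earn_le hval (j := j) (by linarith) (by linarith)
    · exact earn_le hval (j := j) (by linarith) (by linarith)
  linarith

end Offers

theorem exists_mu {G : SimpleGraph V} {M : V → V → Prop} (hM : IsMatching G M) :
    ∃ μ : V → V, (∀ i, M i (μ i) ∨ ((∀ j, ¬M i j) ∧ μ i = i)) ∧ (∀ i j, M i j → μ i = j) ∧
      ∀ i, μ (μ i) = i := by
  classical
  have h1 : ∀ i, ∃ j, M i j ∨ ((∀ j, ¬M i j) ∧ j = i) := by
    intro i
    by_cases h : ∃ j, M i j
    · obtain ⟨j, hj⟩ := h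
      exact ⟨j, Or.inl hj⟩
    · push Not at h
      exact ⟨i, Or.inr ⟨h, rfl⟩⟩
  choose μ hμ using h1
  have h2 : ∀ i j, M i j → μ i = j := by
    intro i j hij
    rcases hμ i with h | h
    · exact hM.unique i _ _ h hij
    · exact absurd hij (h.1 j)
  refine ⟨μ, hμ, h2, fun i => ?_⟩
  rcases hμ i with h | h
  · exact h2 _ _ (hM.symm _ _ h)
  · rw [h.2, h.2]

theorem exists_dual (G : SimpleGraph V) [DecidableRel G.Adj]
    (w : V → V → ℝ) (hw : GoodW G w) (M : V → V → Prop) (hM : IsMatching G M)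
    (g : ℝ) (hg : 0 < g)
    (hgap : ∀ x : V → V → ℝ, LPFeasible G x → HalfIntegral x → x ≠ mInd M →
      LPval G w x + g ≤ LPval G w (mInd M))
    (c : ℝ) (hc : 0 ≤ c) (hcn : (Fintype.card V : ℝ) * c ≤ g) :
    ∃ y : V → ℝ, (∀ i j, M i j → y i + y j ≤ w i j) ∧
      (∀ i j, G.Adj i j → ¬M i j → w i j + c ≤ y i + y j) ∧
      (∀ i, (∀ j, ¬M i j) → y i = 0) ∧ (∀ i j, M i j → c ≤ y i) := by
  classical
  obtain ⟨μ, hμ, hμM, hμμ⟩ := exists_mu hM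
  set W : V → V → ℝ := fun i j => if G.Adj i j then w i j else 0 with hW
  have hWs : ∀ i j, W i j = W j i := by
    intro i j
    simp only [hW, G.adj_comm i j, hw.1 i j]
  have hW0 : ∀ i j, 0 ≤ W i j := by
    intro i j
    simp only [hW]
    split_ifs with h
    · exact (hw.2 i j h).le
    · exact le_rfl
  set W' : V → V → ℝ := fun i j =>
    W i j + if (j ≠ μ i ∧ (G.Adj i j ∨ i = j)) then 2 * c else 0 with hW'
  have hW'μ : ∀ i, W' i (μ i) = W i (μ i) := by intro i; simp [hW']
  have hW'c : ∀ i j, W' i j ≤ W i j + 2 * c := by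
    intro i j
    simp only [hW']
    split_ifs <;> linarith
  have hW'0 : ∀ i j, 0 ≤ W' i j := by
    intro i j
    simp only [hW']
    have := hW0 i j
    split_ifs <;> linarith
  have hvalx : ∀ x : V → V → ℝ, LPval G w x = 1 / 2 * ∑ i, ∑ j, W i j * x i j := by
    intro x
    unfold LPval
    congr 1
    refine Finset.sum_congr rfl fun i _ => ?_
    rw [SimpleGraph.neighborFinset_eq_filter, Finset.sum_filter]
    refine Finset.sum_congr rfl fun j _ => ?_
    simp only [hW]
    split_ifs <;> simp
  have hvalM : LPval G w (mInd M) = 1 / 2 * ∑ i, W i (μ i) := by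
    rw [hvalx]
    congr 1
    refine Finset.sum_congr rfl fun i _ => ?_
    rw [Finset.sum_eq_single (μ i)]
    · rcases hμ i with h | h
      · simp [mInd, h]
      · simp [hW, h.2]
    · intro j _ hj
      have : ¬M i j := fun h => hj (hμM i j h).symm
      simp [mInd, this]
    · simp
  have hperm : ∀ π : Equiv.Perm V, ∑ i, W' i (π i) ≤ ∑ i, W i (μ i) := by
    intro π
    set x : V → V → ℝ := fun i j =>
      ((if G.Adj i j ∧ π i = j then (1 : ℝ) else 0) + (if G.Adj i j ∧ π j = i then 1 else 0)) / 2
      with hx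
    have hxf : LPFeasible G x := by
      refine ⟨?_, ?_, ?_, ?_⟩
      · intro i j
        simp only [hx, G.adj_comm i j]
        ring
      · intro i j
        simp only [hx]
        split_ifs <;> norm_num
      · intro i j h
        simp [hx, h]
      · intro i
        have h1 : ∑ j ∈ G.neighborFinset i, x i j ≤
            ∑ j, ((if π i = j then (1 : ℝ) else 0) + (if j = π.symm i then 1 else 0)) / 2 := by
          refine (Finset.sum_le_sum fun j hj => ?_).trans
            (Finset.sum_le_univ_sum_of_nonneg fun j => ?_)
          · have : (j = π.symm i) ↔ π j = i := by rw [Equiv.eq_symm_apply]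
            simp only [hx, this]
            by_cases hA : G.Adj i j
            · simp [hA]
            · simp only [hA, false_and, if_false]
              split_ifs <;> norm_num
          · split_ifs <;> norm_num
        refine h1.trans ?_
        rw [← Finset.sum_div, Finset.sum_add_distrib]
        simp
    have hxh : HalfIntegral x := by
      intro i j
      simp only [hx]
      split_ifs <;> norm_num
    have hxv : LPval G w x = 1 / 2 * ∑ i, W i (π i) := by
      rw [hvalx]
      congr 1
      have h1 : ∀ i j, W i j * x i j =
          (W i j * (if π i = j then 1 else 0)) / 2 + (W i j * (if π j = i then 1 else 0)) / 2 := by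
        intro i j
        simp only [hx, hW]
        by_cases hA : G.Adj i j
        · simp only [hA, true_and, if_true]; ring
        · simp [hA]
      have h2 : ∑ i, ∑ j, (W i j * (if π i = j then (1 : ℝ) else 0)) / 2
          = (∑ i, W i (π i)) / 2 := by
        rw [Finset.sum_div]
        refine Finset.sum_congr rfl fun i _ => ?_
        rw [← Finset.sum_div]
        simp
      have h3 : ∑ i, ∑ j, (W i j * (if π j = i then (1 : ℝ) else 0)) / 2
          = (∑ i, W i (π i)) / 2 := by
        rw [Finset.sum_comm, ← h2]
        refine Finset.sum_congr rfl fun i _ => Finset.sum_congr rfl fun j _ => ?_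
        rw [hWs]
      simp only [h1, Finset.sum_add_distrib]
      rw [h2, h3]
      ring
    by_cases hxM : x = mInd M
    · refine le_of_eq (Finset.sum_congr rfl fun i _ => ?_)
      rcases hμ i with h | h
      · have h1 : x i (μ i) = 1 := by rw [hxM]; simp [mInd, h]
        have h2 : π i = μ i := by
          by_contra hne
          simp only [hx, hne, and_false, if_false] at h1
          split_ifs at h1 <;> norm_num at h1
        rw [h2, hW'μ]
      · have h1 : x i (π i) = 0 := by rw [hxM]; simp [mInd, h.1]
        have h2 : ¬G.Adj i (π i) := by
          intro hA
          simp only [hx, hA, true_and, if_true] at h1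
          split_ifs at h1 <;> norm_num at h1
        have h3 : ¬(π i ≠ μ i ∧ (G.Adj i (π i) ∨ i = π i)) := by
          rintro ⟨h4, h5 | h5⟩
          · exact h2 h5
          · exact h4 (by rw [h.2, ← h5])
        simp only [hW', if_neg h3]
        simp [hW, h2, h.2]
    · have h1 := hgap x hxf hxh hxM
      rw [hxv, hvalM] at h1
      have h2 : ∑ i, W' i (π i) ≤ ∑ i, (W i (π i) + 2 * c) :=
        Finset.sum_le_sum fun i _ => hW'c _ _
      rw [Finset.sum_add_distrib (g := fun _ => 2 * c), Finset.sum_const, nsmul_eq_mul,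
        Finset.card_univ] at h2
      linarith
  obtain ⟨u, hu⟩ := exists_potential (fun i j => W' i (μ j) - W j (μ j))
    (fun i => by simp [hW'μ]) (by
      intro π
      have h1 := hperm (π.trans (Function.Involutive.toPerm μ hμμ))
      have h2 : ∑ i, W (π i) (μ (π i)) = ∑ i, W i (μ i) :=
        Equiv.sum_comp π fun i => W i (μ i)
      rw [Finset.sum_sub_distrib, h2]
      have h3 : ∑ i, W' i (μ (π i)) ≤ ∑ i, W i (μ i) := h1
      linarith)
  have huv : ∀ i j, W' i j ≤ u i + (W (μ j) j - u (μ j)) := by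
    intro i j
    have := hu i (μ j)
    rw [hμμ] at this
    linarith
  refine ⟨fun i => (u i + (W (μ i) i - u (μ i))) / 2, ?_, ?_, ?_, ?_⟩
  · intro i j hij
    have h1 := hμM _ _ hij
    have h2 := hμM _ _ (hM.symm _ _ hij)
    have h3 : W i j = w i j := by simp [hW, hM.subset _ _ hij]
    have h4 := hWs i j
    simp only [h1, h2]
    linarith
  · intro i j hA hij
    have h1 := huv i j
    have h2 := huv j i
    have h3 : W' i j = w i j + 2 * c := by
      have : j ≠ μ i := by
        rintro rfl
        rcases hμ i with h | h
        · exact hij h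
        · rw [h.2] at hA; exact G.loopless.irrefl _ hA
      simp [hW', hW, hA, this]
    have h4 : W' j i = w i j + 2 * c := by
      have : i ≠ μ j := by
        rintro rfl
        rcases hμ j with h | h
        · exact hij (hM.symm _ _ h)
        · rw [h.2] at hA; exact G.loopless.irrefl _ hA
      simp [hW', hW, hA.symm, this, hw.1 j i]
    simp only
    linarith
  · intro i hi
    have h1 : μ i = i := by
      rcases hμ i with h | h
      · exact absurd h (hi _)
      · exact h.2
    simp [h1, hW]
  · intro i j hij
    have h1 := huv i i
    have h2 : i ≠ μ i := by
      intro h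
      rw [hμM _ _ hij] at h
      have := hM.subset _ _ hij
      rw [← h] at this
      exact G.loopless.irrefl _ this
    have h3 : W' i i = 2 * c := by simp [hW', hW, h2]
    simp only
    have := hu i (μ i)
    linarith

theorem key (G : SimpleGraph V) [DecidableRel G.Adj]
    (w : V → V → ℝ) (hw : GoodW G w) (M : V → V → Prop) (hM : IsMatching G M)
    (ε : ℝ) (hε0 : 0 < ε) (c : ℝ) (hc : 6 * (Fintype.card V : ℝ) * ε < c)
    (y : V → ℝ) (y1 : ∀ i j, M i j → y i + y j ≤ w i j)
    (y2 : ∀ i j, G.Adj i j → ¬M i j → w i j + c ≤ y i + y j)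
    (y3 : ∀ i, (∀ j, ¬M i j) → y i = 0) (y4 : ∀ i j, M i j → c ≤ y i)
    (α : V → V → ℝ) (hval : ValidMsg G α) (hefp : IsEpsFixedPt G w α ε)
    (i j : V) (hij : M i j) : upd G w α i j < earn G w α i - 2 * ε := by
  classical
  by_contra hbad
  push Not at hbad
  set γ := earn G w α with hγ
  set n : ℝ := (Fintype.card V : ℝ) with hn
  have hn1 : 1 ≤ n := by
    have : 0 < Fintype.card V := Fintype.card_pos_iff.2 ⟨i⟩
    rw [hn]; exact_mod_cast this
  have hnε : ε ≤ n * ε := by nlinarith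
  set r : V → ℝ := fun v => ((univ.filter fun u => γ v - y v < γ u - y u).card : ℝ) with hr
  have hr0 : ∀ v, 0 ≤ r v := fun v => Nat.cast_nonneg _
  have hrlt : ∀ u v, γ v - y v < γ u - y u → r u + 1 ≤ r v := by
    intro u v huv
    have : (univ.filter fun t => γ u - y u < γ t - y t).card <
        (univ.filter fun t => γ v - y v < γ t - y t).card := by
      apply Finset.card_lt_card
      rw [Finset.ssubset_iff_of_subset]
      · exact ⟨u, by simpa using huv, by simp⟩
      · intro t ht
        simp only [Finset.mem_filter, Finset.mem_univ, true_and] at ht ⊢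
        linarith
    simp only [hr]
    exact_mod_cast this
  have hrn : ∀ v, r v + 1 ≤ n := by
    intro v
    have : (univ.filter fun t => γ v - y v < γ t - y t).card < Fintype.card V := by
      rw [← Finset.card_univ]
      apply Finset.card_lt_card
      rw [Finset.ssubset_iff_of_subset (Finset.subset_univ _)]
      exact ⟨v, Finset.mem_univ _, by simp⟩
    simp only [hr, hn]
    exact_mod_cast this
  set B : Finset V := univ.filter fun v => -(ε / 2) ≤ γ v - y v ∧
    ∃ p, M v p ∧ γ v - 4 * ε * (n - r v) ≤ upd G w α v p with hB
  have hBne : B.Nonempty := by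
    have h1 : γ i - 2 * ε ≤ upd G w α i j := hbad
    have h2 := prop_bad hw hval hε0 hefp (hM.subset _ _ hij) (by linarith) h1
    rw [← hγ] at h2
    have h3 := L0 hw hval hε0 hefp (hM.subset _ _ hij)
    rw [← hγ] at h3
    have h4 := y1 i j hij
    have h5 : ∀ v, 4 * ε ≤ 4 * ε * (n - r v) := by
      intro v
      have := hrn v
      nlinarith
    rcases le_total (γ i - y i) (γ j - y j) with h | h
    · refine ⟨j, ?_⟩
      simp only [hB, Finset.mem_filter, Finset.mem_univ, true_and]
      exact ⟨by linarith, i, hM.symm _ _ hij, by linarith [h5 j]⟩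
    · refine ⟨i, ?_⟩
      simp only [hB, Finset.mem_filter, Finset.mem_univ, true_and]
      exact ⟨by linarith, j, hij, by linarith [h5 i]⟩
  obtain ⟨v, hv, hmax⟩ := Finset.exists_max_image B (fun v => γ v - y v) hBne
  simp only [hB, Finset.mem_filter, Finset.mem_univ, true_and] at hv
  obtain ⟨hD, p, hvp, hδ⟩ := hv
  set δ := 4 * ε * (n - r v) with hδdef
  have hδ1 : δ ≤ 4 * (n * ε) := by
    have := mul_nonneg hε0.le (hr0 v)
    nlinarith
  have hδ0 : 0 ≤ δ := by
    have := hrn v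
    rw [hδdef]
    apply mul_nonneg <;> linarith
  have hc' : 6 * (n * ε) < c := by linarith
  have hyv := y4 v p hvp
  have hup : 0 < upd G w α v p := by
    by_contra h
    linarith
  obtain ⟨l, hl, hle⟩ := exists_fmax hup
  change offer w α l v = upd G w α v p at hle
  rw [Finset.mem_erase, SimpleGraph.mem_neighborFinset] at hl
  obtain ⟨hlp, hvl⟩ := hl
  have hvlM : ¬M v l := fun h => hlp (hM.unique _ _ _ h hvp)
  have hop : 0 < offer w α l v := by rw [hle]; exact hup
  have h1 := L1 hw hval hε0 hefp hvl.symm hop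
  rw [← hγ] at h1
  have h2 := y2 v l hvl hvlM
  have hsym := hw.1 v l
  have h3 : (γ v - y v) + (γ l - y l) ≤ δ + ε - c := by linarith
  by_cases hlm : ∃ k, M l k
  · obtain ⟨k, hlk⟩ := hlm
    have hkv : v ≠ k := by
      rintro rfl
      exact hvlM (hM.symm _ _ hlk)
    have h4 := L0 hw hval hε0 hefp (hM.subset _ _ hlk)
    rw [← hγ] at h4
    have h5 := y1 l k hlk
    have h6 : γ v - y v < γ k - y k := by linarith
    have h7 := L3 hw hval hε0 hefp hvl.symm hop (δ := δ) (by rw [← hγ]; linarith)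
    rw [← hγ] at h7
    have h8 := offer_le_upd (w := w) (α := α) hvl.symm hkv
    have h9 := prop_bad hw hval hε0 hefp (hM.subset _ _ hlk) (δ := δ + 2 * ε) (by linarith)
      (by rw [← hγ]; linarith)
    rw [← hγ] at h9
    have h10 := hrlt _ _ h6
    have h11 : δ + 4 * ε ≤ 4 * ε * (n - r k) := by
      rw [hδdef]
      nlinarith
    have hk : k ∈ B := by
      simp only [hB, Finset.mem_filter, Finset.mem_univ, true_and]
      exact ⟨by linarith, l, hM.symm _ _ hlk, by linarith⟩
    have := hmax k hk
    linarith
  · push Not at hlm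
    have h4 := y3 l hlm
    have h5 : 0 ≤ γ l := earn_nonneg hval l
    linarith

theorem stable_unique (G : SimpleGraph V) [DecidableRel G.Adj]
    (w : V → V → ℝ) (M : V → V → Prop) (γ : V → ℝ)
    (ho : IsOutcome G w M γ) (hs : Stable G w M γ) : LPOptimal G w (mInd M) := by
  classical
  obtain ⟨hM, h0, hm, hu⟩ := ho
  have hsumM : ∀ i (f : V → ℝ), (∀ j, M i j → 
      ∑ k ∈ G.neighborFinset i, f k * mInd M i k = f j) := by
    intro i f j hij
    rw [Finset.sum_eq_single j]
    · simp [mInd, hij]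
    · intro k _ hk
      have : ¬M i k := fun h => hk (hM.unique _ _ _ h hij)
      simp [mInd, this]
    · intro h
      exact absurd (by simpa using hM.subset _ _ hij) h
  have hfeas : LPFeasible G (mInd M) := by
    refine ⟨?_, ?_, ?_, ?_⟩
    · intro i j
      have : M i j ↔ M j i := ⟨hM.symm _ _, hM.symm _ _⟩
      simp [mInd, this]
    · intro i j
      unfold mInd
      split_ifs <;> norm_num
    · intro i j h
      have : ¬M i j := fun h' => h (hM.subset _ _ h')
      simp [mInd, this]
    · intro i
      by_cases h : ∃ j, M i j
      · obtain ⟨j, hj⟩ := h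
        have := hsumM i (fun _ => 1) j hj
        simp only [one_mul] at this
        exact this.le
      · push Not at h
        simp [mInd, h]
  have hdouble : ∀ x, LPFeasible G x →
      1 / 2 * ∑ i, ∑ j ∈ G.neighborFinset i, (γ i + γ j) * x i j
        = ∑ i, γ i * ∑ j ∈ G.neighborFinset i, x i j := by
    intro x hx
    have h1 : ∑ i, ∑ j ∈ G.neighborFinset i, γ j * x i j
        = ∑ i, ∑ j ∈ G.neighborFinset i, γ i * x i j := by
      refine (Finset.sum_comm' (s := univ) (t := fun i => G.neighborFinset i)
        (t' := univ) (s' := fun j => G.neighborFinset j) (f := fun i j => γ j * x i j) ?_).trans ?_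
      · intro a b
        simp [G.adj_comm]
      · apply Finset.sum_congr rfl
        intro i _
        apply Finset.sum_congr rfl
        intro j _
        rw [hx.1 j i]
    simp only [add_mul, Finset.sum_add_distrib, h1, Finset.mul_sum]
    ring
  have hub : ∀ x, LPFeasible G x → LPval G w x ≤ ∑ i, γ i := by
    intro x hx
    have h1 : LPval G w x ≤ 1 / 2 * ∑ i, ∑ j ∈ G.neighborFinset i, (γ i + γ j) * x i j := by
      unfold LPval
      refine mul_le_mul_of_nonneg_left ?_ (by norm_num)
      refine Finset.sum_le_sum fun i _ => Finset.sum_le_sum fun j hj => ?_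
      refine mul_le_mul_of_nonneg_right ?_ (hx.2.1 i j)
      by_cases h : M i j
      · exact (hm i j h).ge
      · exact hs i j (by simpa using hj) h
    rw [hdouble x hx] at h1
    refine h1.trans (Finset.sum_le_sum fun i _ => ?_)
    have := hx.2.2.2 i
    have := h0 i
    nlinarith
  have heq : LPval G w (mInd M) = ∑ i, γ i := by
    have h1 : LPval G w (mInd M)
        = 1 / 2 * ∑ i, ∑ j ∈ G.neighborFinset i, (γ i + γ j) * mInd M i j := by
      unfold LPval
      congr 1
      refine Finset.sum_congr rfl fun i _ => Finset.sum_congr rfl fun j hj => ?_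
      by_cases h : M i j
      · rw [hm i j h]
      · simp [mInd, h]
    rw [h1, hdouble _ hfeas]
    refine Finset.sum_congr rfl fun i _ => ?_
    by_cases h : ∃ j, M i j
    · obtain ⟨j, hj⟩ := h
      have := hsumM i (fun _ => 1) j hj
      simp only [one_mul] at this
      rw [this, mul_one]
    · push Not at h
      rw [hu i h, zero_mul]
  exact ⟨hfeas, fun x hx => by rw [heq]; exact hub x hx⟩

theorem mInd_inj {M N : V → V → Prop} (h : mInd M = mInd N) : M = N := by
  funext i j
  have := congrFun (congrFun h i) j
  unfold mInd at this
  by_cases h1 : M i j <;> by_cases h2 : N i j <;> simp_all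

/-- If the LP has a unique optimum, integral, corresponding to
`M*` with gap `g > 0`, then any `ε`-fixed point with `ε < g/(6n²)` induces `M*` and
its earnings form a `6ε`-Nash bargaining solution with `M*`; conversely, every
`ε'`-Nash bargaining solution uses the matching `M*`. -/
theorem eps_fixedPoint_induces_and_epsNB
    {V : Type*} [Fintype V] [DecidableEq V] (G : SimpleGraph V) [DecidableRel G.Adj]
    (w : V → V → ℝ) (hw : GoodW G w)
    (Mstar : V → V → Prop) (hM : IsMatching G Mstar)
    (hopt : LPOptimal G w (mInd Mstar))
    (huniq : ∀ x, LPOptimal G w x → x = mInd Mstar)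
    (g : ℝ) (hg : 0 < g)
    (hgap : ∀ x : V → V → ℝ, LPFeasible G x → HalfIntegral x → x ≠ mInd Mstar →
      LPval G w x + g ≤ LPval G w (mInd Mstar))
    (ε : ℝ) (hε0 : 0 < ε) (hε : ε < g / (6 * (Fintype.card V : ℝ) ^ 2))
    (α : V → V → ℝ) (hval : ValidMsg G α) (hefp : IsEpsFixedPt G w α ε) :
    Induces G (offer w α) Mstar ∧ IsEpsNB G w Mstar (earn G w α) (6 * ε) ∧
      ∀ ε' : ℝ, 0 < ε' → ∀ (M : V → V → Prop) (γNB : V → ℝ),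
        IsEpsNB G w M γNB ε' → M = Mstar := by
  classical
  have hpart3 : ∀ ε' : ℝ, 0 < ε' → ∀ (M : V → V → Prop) (γNB : V → ℝ),
        IsEpsNB G w M γNB ε' → M = Mstar := by
    intro ε' _ M γ h
    exact mInd_inj (huniq _ (stable_unique G w M γ h.1 h.2.1))
  set γ := earn G w α with hγ
  have hγ0 : ∀ i, 0 ≤ γ i := fun i => earn_nonneg hval i
  have hdual : ∃ c : ℝ, 6 * (Fintype.card V : ℝ) * ε < c ∧ 0 < c ∧ ∃ y : V → ℝ,
      (∀ i j, Mstar i j → y i + y j ≤ w i j) ∧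
      (∀ i j, G.Adj i j → ¬Mstar i j → w i j + c ≤ y i + y j) ∧
      (∀ i, (∀ j, ¬Mstar i j) → y i = 0) ∧ (∀ i j, Mstar i j → c ≤ y i) := by
    rcases isEmpty_or_nonempty V with hV | hV
    · exact ⟨1, by simp, one_pos, fun _ => 0, fun i => hV.elim i, fun i => hV.elim i,
        fun i => hV.elim i, fun i => hV.elim i⟩
    · have hn : 0 < (Fintype.card V : ℝ) := by exact_mod_cast Fintype.card_pos
      refine ⟨g / Fintype.card V, ?_, by positivity, exists_dual G w hw Mstar hM g hg hgap _
        (by positivity) (le_of_eq (mul_div_cancel₀ _ hn.ne'))⟩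
      rw [lt_div_iff₀ (by positivity)] at hε
      rw [lt_div_iff₀ hn]
      nlinarith
  obtain ⟨c, hc, hc0, y, y1, y2, y3, y4⟩ := hdual
  have hkey := key G w hw Mstar hM ε hε0 c hc y y1 y2 y3 y4 α hval hefp
  rw [← hγ] at hkey
  have hoγ : ∀ i k, G.Adj i k → offer w α k i ≤ γ i := fun i k h => offer_le_earn h
  -- matched nodes: partner gives the unique best offer
  have hbest : ∀ i j, Mstar i j → γ i = offer w α j i ∧ 0 < γ i ∧
      ∀ k, G.Adj i k → k ≠ j → offer w α k i < offer w α j i := by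
    intro i j hij
    have h1 := hkey i j hij
    have h2 : γ i ≤ offer w α j i := by
      by_contra h
      push Not at h
      have h3 : γ i ≤ max (offer w α j i) (upd G w α i j) :=
        earn_le hval (le_max_left _ _) (le_max_right _ _)
      have := max_lt h (by linarith : upd G w α i j < γ i)
      linarith
    have h3 : γ i = offer w α j i := le_antisymm h2 (hoγ i j (hM.subset _ _ hij))
    have h0 : 0 ≤ upd G w α i j := upd_nonneg hval i j
    refine ⟨h3, by linarith, fun k hk hkj => ?_⟩
    have : offer w α k i ≤ upd G w α i j := offer_le_upd hk hkj
    linarith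
  -- no edge between unmatched nodes
  have hnoedge : ∀ i k, G.Adj i k → (∀ j, ¬Mstar i j) → (∀ j, ¬Mstar k j) → False := by
    intro i k h hi hk
    have := y2 i k h (hi k)
    have := y3 i hi
    have := y3 k hk
    have := hw.2 i k h
    linarith
  -- no near-best offers outside the matching
  have hnear : ∀ i k, G.Adj i k → ¬Mstar i k → γ i - 2 * ε ≤ offer w α k i →
      ∀ j, ¬Mstar i j := by
    intro i k h hik ho j hij
    have h1 := hkey i j hij
    have h2 : offer w α k i ≤ upd G w α i j :=
      offer_le_upd h (fun hkj => hik (hkj ▸ hij))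
    linarith
  have hunm : ∀ i, (∀ j, ¬Mstar i j) → γ i = 0 := by
    intro i hi
    by_contra hne
    have hpos : 0 < earn G w α i := lt_of_le_of_ne (hγ0 i) (Ne.symm hne)
    obtain ⟨k, hk, hke⟩ := exists_fmax hpos
    change offer w α k i = γ i at hke
    rw [SimpleGraph.mem_neighborFinset] at hk
    have h1 := L3 hw hval hε0 hefp hk.symm (by rw [hke]; exact hpos) (δ := 0)
      (by rw [hke, ← hγ]; linarith)
    rw [← hγ] at h1
    exact hnoedge i k hk hi (hnear k i hk.symm (fun h => hi k (hM.symm _ _ h)) (by linarith))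
  have hsum : ∀ i j, Mstar i j → γ i + γ j = w i j := by
    intro i j hij
    obtain ⟨h1, -, -⟩ := hbest i j hij
    obtain ⟨h2, -, -⟩ := hbest j i (hM.symm _ _ hij)
    rcases offer_cases hw hval (hM.subset _ _ hij) with ⟨a, b, d⟩ | ⟨s, a, b, d, e⟩
    · linarith
    · have h3 := hkey i j hij
      have h4 := abs_le.1 (hefp i j (hM.subset _ _ hij))
      linarith
  have hstab : Stable G w Mstar γ := by
    intro i j h hij
    by_contra hlt
    push Not at hlt
    have h1 := L2 hw hval hε0 hefp h
    have h2 := L2 hw hval hε0 hefp h.symm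
    rw [← hγ] at h1 h2
    have hs := hw.1 i j
    have hji : ¬Mstar j i := fun h' => hij (hM.symm _ _ h')
    exact hnoedge i j h (hnear i j h hij (by linarith)) (hnear j i h.symm hji (by linarith))
  have halt : ∀ i j, Mstar i j → |bestAlt G w γ i j - upd G w α i j| ≤ ε := by
    intro i j hij
    have hp : ∀ k, 0 ≤ pos (w i k - γ k) := fun k => le_max_right _ _
    have hb0 : 0 ≤ bestAlt G w γ i j := fmax_nonneg fun k _ => hp k
    have hu0 : 0 ≤ upd G w α i j := upd_nonneg hval i j
    have h1 : bestAlt G w γ i j ≤ upd G w α i j + ε := by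
      refine fmax_le (by linarith) fun k hk => ?_
      rw [Finset.mem_erase, SimpleGraph.mem_neighborFinset] at hk
      have h2 : offer w α k i ≤ upd G w α i j := offer_le_upd hk.2 hk.1
      have h3 := L2 hw hval hε0 hefp hk.2.symm
      rw [← hγ] at h3
      have := hw.1 i k
      exact max_le (by linarith) (by linarith)
    have h2 : upd G w α i j ≤ bestAlt G w γ i j + ε := by
      refine fmax_le (by linarith) fun k hk => ?_
      have hle : pos (w i k - γ k) ≤ bestAlt G w γ i j :=
        le_fmax (f := fun k => pos (w i k - γ k)) hk
      rw [Finset.mem_erase, SimpleGraph.mem_neighborFinset] at hk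
      by_cases ho : 0 < offer w α k i
      · have h3 := L1 hw hval hε0 hefp hk.2.symm ho
        rw [← hγ] at h3
        have h4 : w i k - γ k ≤ pos (w i k - γ k) := le_max_left _ _
        have := hw.1 i k
        linarith
      · linarith
    rw [abs_le]
    constructor <;> linarith
  refine ⟨⟨hM, ?_, ?_⟩, ⟨⟨hM, hγ0, hsum, hunm⟩, hstab, ?_⟩, hpart3⟩
  · rintro i ⟨k, hk, hpos⟩
    have hi : ∃ j, Mstar i j := by
      by_contra h
      push Not at h
      have := hunm i h
      have := hoγ i k hk
      linarith
    obtain ⟨j, hj⟩ := hi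
    exact ⟨j, hj, (hbest i j hj).2.2⟩
  · intro i hi j hij
    have h1 := (hbest i j hij).2.1
    change γ i = 0 at hi
    linarith
  · intro i j hij
    have hA := hM.subset _ _ hij
    have h1 := abs_le.1 (halt i j hij)
    have h2 := abs_le.1 (halt j i (hM.symm _ _ hij))
    have h3 := abs_le.1 (hefp i j hA)
    have h4 := abs_le.1 (hefp j i hA.symm)
    have h5 := (hbest i j hij).1
    have h6 := (hbest j i (hM.symm _ _ hij)).1
    have h7 : offer w α i j - α j i = offer w α j i - α i j := by
      rcases offer_cases hw hval hA with ⟨a, b, d⟩ | ⟨s, a, b, d, e⟩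
      · exact b
      · have := hkey i j hij
        linarith
    rw [abs_le]
    constructor <;> linarith

end EN
end

section
/- (Isolation Lemma.) Let G=(V,E) be a bipartite graph with baseline weights (w_e)_{e∈E}, and choose η > 0 and ξ > 0. Generate random weights by choosing, independently for each e∈E, w̄_e uniformly in [w_e, w_e+η]. Let 𝓜 be the set of matchings of G, let M* be a matching maximizing the random weight w̄(M) := Σ_{e∈M} w̄_e, and let M** be a matching of maximum weight in 𝓜 ∖ {M*}. Then the probability that w̄(M*) − w̄(M**) ≥ ηξ/(2|E|) is at least 1 − ξ. -/
namespace EN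

open Finset

variable {V : Type*}

variable [Fintype V] [DecidableEq V]

/-- A matching, represented as a finite set of unordered edges of `G`. -/
def IsMatchingF {V : Type*} [Fintype V] [DecidableEq V] (G : SimpleGraph V)
    [DecidableRel G.Adj] (M : Finset (Sym2 V)) : Prop :=
  M ⊆ G.edgeFinset ∧ ∀ e ∈ M, ∀ f ∈ M, e ≠ f → ∀ v : V, v ∈ e → v ∉ f

/-- The (random) weight of an unordered edge, read off from the sample point `ω`. -/
noncomputable def wbar {V : Type*} [Fintype V] [DecidableEq V] (G : SimpleGraph V)
    [DecidableRel G.Adj] (ω : {e : Sym2 V // e ∈ G.edgeFinset} → ℝ) (e : Sym2 V) : ℝ :=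
  if h : e ∈ G.edgeFinset then ω ⟨e, h⟩ else 0

/-- The (random) weight of a matching. -/
noncomputable def mWeight {V : Type*} [Fintype V] [DecidableEq V] (G : SimpleGraph V)
    [DecidableRel G.Adj] (ω : {e : Sym2 V // e ∈ G.edgeFinset} → ℝ)
    (M : Finset (Sym2 V)) : ℝ :=
  ∑ e ∈ M, wbar G ω e

/-- Anti-concentration of one coordinate around a function of the others. -/
lemma pi_slab_le {ι : Type*} [Fintype ι] [DecidableEq ι] (μ : ι → MeasureTheory.Measure ℝ)
    [∀ i, MeasureTheory.IsProbabilityMeasure (μ i)] (i : ι) (f : (ι → ℝ) → ℝ)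
    (hf : Measurable f) (hfi : ∀ x t, f (Function.update x i t) = f x) (δ : ℝ)
    (c : ENNReal) (hc : ∀ a : ℝ, μ i {t | |t - a| < δ} ≤ c) :
    MeasurableSet {x : ι → ℝ | |x i - f x| < δ} ∧
      MeasureTheory.Measure.pi μ {x | |x i - f x| < δ} ≤ c := by
  have hm : MeasurableSet {x : ι → ℝ | |x i - f x| < δ} := by
    apply measurableSet_lt
    · exact continuous_abs.measurable.comp ((measurable_pi_apply i).sub hf)
    · exact measurable_const
  refine ⟨hm, ?_⟩
  rw [← MeasureTheory.lintegral_indicator_one hm]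
  rw [MeasureTheory.lintegral_eq_lmarginal_univ (fun _ => (0 : ℝ)),
    MeasureTheory.lmarginal_erase' _ (measurable_one.indicator hm) (Finset.mem_univ i)]
  calc _ ≤ (MeasureTheory.lmarginal μ (Finset.univ.erase i) (fun _ => c)) (fun _ => 0) := by
        apply MeasureTheory.lmarginal_mono
        intro x
        refine le_trans (le_of_eq ?_) (hc (f x))
        have hm2 : MeasurableSet {t : ℝ | |t - f x| < δ} := by
          apply measurableSet_lt
          · exact continuous_abs.measurable.comp (measurable_id.sub_const _)
          · exact measurable_const
        rw [← MeasureTheory.lintegral_indicator_one hm2]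
        apply MeasureTheory.lintegral_congr
        intro t
        simp [Set.indicator, hfi]
    _ = c := by simp [MeasureTheory.lmarginal]

lemma measurable_mWeight {V : Type*} [Fintype V] [DecidableEq V] (G : SimpleGraph V)
    [DecidableRel G.Adj] (M : Finset (Sym2 V)) :
    Measurable (fun ω => mWeight G ω M) := by
  unfold mWeight
  apply Finset.measurable_sum
  intro e _
  unfold wbar
  split_ifs with h
  · exact measurable_pi_apply _
  · exact measurable_const

lemma mWeight_update {V : Type*} [Fintype V] [DecidableEq V] (G : SimpleGraph V)
    [DecidableRel G.Adj] (M : Finset (Sym2 V)) (e : {e : Sym2 V // e ∈ G.edgeFinset})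
    (he : e.1 ∉ M) (ω : {e : Sym2 V // e ∈ G.edgeFinset} → ℝ) (t : ℝ) :
    mWeight G (Function.update ω e t) M = mWeight G ω M := by
  unfold mWeight
  apply Finset.sum_congr rfl
  intro e' he'
  unfold wbar
  split_ifs with h
  · rw [Function.update_of_ne]
    rintro rfl
    exact he he'
  · rfl

lemma mWeight_erase {V : Type*} [Fintype V] [DecidableEq V] (G : SimpleGraph V)
    [DecidableRel G.Adj] (M : Finset (Sym2 V)) (e : {e : Sym2 V // e ∈ G.edgeFinset})
    (he : e.1 ∈ M) (ω : {e : Sym2 V // e ∈ G.edgeFinset} → ℝ) :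
    mWeight G ω M = ω e + mWeight G ω (M.erase e.1) := by
  unfold mWeight
  rw [← Finset.add_sum_erase _ _ he]
  congr 1
  unfold wbar
  rw [dif_pos e.2]

/-- A threshold function for the edge `e`. -/
lemma exists_threshold {V : Type*} [Fintype V] [DecidableEq V] (G : SimpleGraph V)
    [DecidableRel G.Adj] (e : {e : Sym2 V // e ∈ G.edgeFinset}) :
    ∃ f : ({e : Sym2 V // e ∈ G.edgeFinset} → ℝ) → ℝ, Measurable f ∧
      (∀ ω t, f (Function.update ω e t) = f ω) ∧
      ∀ ω δ M N, IsMatchingF G M → IsMatchingF G N → e.1 ∈ M → e.1 ∉ N →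
        ((∀ K, IsMatchingF G K → mWeight G ω K ≤ mWeight G ω M) ∧
            mWeight G ω M < mWeight G ω N + δ ∨
          (∀ K, IsMatchingF G K → mWeight G ω K ≤ mWeight G ω N) ∧
            mWeight G ω N < mWeight G ω M + δ) → |ω e - f ω| < δ := by
  classical
  let SA : Finset (Finset (Sym2 V)) := Finset.univ.filter fun M => IsMatchingF G M ∧ e.1 ∉ M
  let SB : Finset (Finset (Sym2 V)) := Finset.univ.filter fun M => IsMatchingF G M ∧ e.1 ∈ M
  have hA : SA.Nonempty := ⟨∅, Finset.mem_filter.2 ⟨Finset.mem_univ _, ⟨by simp, by simp⟩, by simp⟩⟩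
  have hB : SB.Nonempty := by
    refine ⟨{e.1}, ?_⟩
    simp only [SB, Finset.mem_filter, Finset.mem_univ, true_and, Finset.mem_singleton, and_true]
    refine ⟨Finset.singleton_subset_iff.2 e.2, ?_⟩
    intro a ha b hb hab
    simp only [Finset.mem_singleton] at ha hb
    exact absurd (ha.trans hb.symm) hab
  let A : ({e : Sym2 V // e ∈ G.edgeFinset} → ℝ) → ℝ := fun ω =>
    SA.sup' hA fun M => mWeight G ω M
  let B : ({e : Sym2 V // e ∈ G.edgeFinset} → ℝ) → ℝ := fun ω =>
    SB.sup' hB fun M => mWeight G ω (M.erase e.1)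
  have mA : Measurable A := by
    have := Finset.measurable_sup' (f := fun M ω => mWeight G ω M) hA
      (fun M _ => measurable_mWeight G M)
    convert this using 1
    ext ω
    simp [A, Finset.sup'_apply]
  have mB : Measurable B := by
    have := Finset.measurable_sup' (f := fun M ω => mWeight G ω (M.erase e.1)) hB
      (fun M _ => measurable_mWeight G (M.erase e.1))
    convert this using 1
    ext ω
    simp [B, Finset.sup'_apply]
  refine ⟨fun ω => A ω - B ω, mA.sub mB, ?_, ?_⟩
  · intro ω t
    have h1 : A (Function.update ω e t) = A ω := by
      apply Finset.sup'_congr hA rfl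
      intro M hM
      exact mWeight_update G M e (Finset.mem_filter.1 hM).2.2 ω t
    have h2 : B (Function.update ω e t) = B ω := by
      apply Finset.sup'_congr hB rfl
      intro M hM
      exact mWeight_update G _ e (by simp) ω t
    simp only [h1, h2]
  · intro ω δ M N hM hN heM heN h
    have hMB : mWeight G ω (M.erase e.1) ≤ B ω :=
      Finset.le_sup' (s := SB) (f := fun M : Finset (Sym2 V) => mWeight G ω (M.erase e.1))
        (Finset.mem_filter.2 ⟨Finset.mem_univ _, hM, heM⟩)
    have hNA : mWeight G ω N ≤ A ω :=
      Finset.le_sup' (s := SA) (f := fun M : Finset (Sym2 V) => mWeight G ω M)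
        (Finset.mem_filter.2 ⟨Finset.mem_univ _, hN, heN⟩)
    have hMe := mWeight_erase G M e heM ω
    obtain ⟨MA, hMA, hA'⟩ := Finset.exists_mem_eq_sup' hA fun M => mWeight G ω M
    obtain ⟨MB, hMB', hB'⟩ := Finset.exists_mem_eq_sup' hB fun M => mWeight G ω (M.erase e.1)
    change A ω = _ at hA'
    change B ω = _ at hB'
    simp only [SA, SB, Finset.mem_filter, Finset.mem_univ, true_and] at hMA hMB'
    have hMBe := mWeight_erase G MB e hMB'.2 ω
    rw [abs_lt]
    rcases h with ⟨hmax, hlt⟩ | ⟨hmax, hlt⟩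
    · have := hmax MA hMA.1
      have := hmax MB hMB'.1
      constructor <;> linarith
    · have := hmax MA hMA.1
      have := hmax MB hMB'.1
      constructor <;> linarith

/-- **Isolation Lemma.** If the weights `w̄_e` are independent and
uniform on `[w_e, w_e + η]`, then with probability at least `1 − ξ`, any maximum
weight matching `M*` beats every other matching by at least `ηξ/(2|E|)`. -/
theorem isolation_lemma
    {V : Type} [Fintype V] [DecidableEq V] (G : SimpleGraph V) [DecidableRel G.Adj]
    (hbip : G.Colorable 2)
    (w : Sym2 V → ℝ) (η ξ : ℝ) (hη : 0 < η) (hξ : 0 < ξ) :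
    ENNReal.ofReal (1 - ξ) ≤
      (MeasureTheory.Measure.pi fun e : {e : Sym2 V // e ∈ G.edgeFinset} =>
          (ENNReal.ofReal η)⁻¹ •
            MeasureTheory.volume.restrict (Set.Icc (w e.1) (w e.1 + η)))
        {ω | ∀ Mstar : Finset (Sym2 V), IsMatchingF G Mstar →
            (∀ M : Finset (Sym2 V), IsMatchingF G M →
              mWeight G ω M ≤ mWeight G ω Mstar) →
            ∀ M : Finset (Sym2 V), IsMatchingF G M → M ≠ Mstar →
              mWeight G ω M + η * ξ / (2 * (G.edgeFinset.card : ℝ)) ≤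
                mWeight G ω Mstar} := by
  classical
  set μ : {e : Sym2 V // e ∈ G.edgeFinset} → MeasureTheory.Measure ℝ := fun e =>
          (ENNReal.ofReal η)⁻¹ •
            MeasureTheory.volume.restrict (Set.Icc (w e.1) (w e.1 + η)) with hμ
  have hη0 : ENNReal.ofReal η ≠ 0 := by simpa using hη
  haveI : ∀ e, MeasureTheory.IsProbabilityMeasure (μ e) := by
    intro e
    constructor
    simp [hμ, ENNReal.inv_mul_cancel hη0 ENNReal.ofReal_ne_top]
  set δ : ℝ := η * ξ / (2 * (G.edgeFinset.card : ℝ)) with hδ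
  choose f hfm hfu hf using fun e => exists_threshold G e
  set c : ENNReal := (ENNReal.ofReal η)⁻¹ * ENNReal.ofReal (2 * δ) with hcdef
  have hc : ∀ e (a : ℝ), μ e {t | |t - a| < δ} ≤ c := by
    intro e a
    have hset : {t : ℝ | |t - a| < δ} = Set.Ioo (a - δ) (a + δ) := by
      ext t
      simp only [Set.mem_setOf_eq, Set.mem_Ioo, abs_lt]
      constructor <;> rintro ⟨h1, h2⟩ <;> constructor <;> linarith
    simp only [hμ, MeasureTheory.Measure.smul_apply, smul_eq_mul, hcdef]
    gcongr
    refine (MeasureTheory.Measure.restrict_apply_le _ _).trans ?_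
    rw [hset, Real.volume_Ioo]
    apply ENNReal.ofReal_le_ofReal
    linarith
  have hs := fun e => pi_slab_le μ e (f e) (hfm e) (hfu e) δ c (hc e)
  set U : Set ({e : Sym2 V // e ∈ G.edgeFinset} → ℝ) := ⋃ e, {x | |x e - f e x| < δ} with hU
  have hUm : MeasurableSet U := MeasurableSet.iUnion fun e => (hs e).1
  have hUle : MeasureTheory.Measure.pi μ U ≤ ENNReal.ofReal ξ := by
    refine (MeasureTheory.measure_iUnion_fintype_le _ _).trans ?_
    refine (Finset.sum_le_sum fun e _ => (hs e).2).trans ?_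
    rw [Finset.sum_const, Finset.card_univ, Fintype.card_coe, nsmul_eq_mul, hcdef,
      ← ENNReal.ofReal_inv_of_pos hη, ← ENNReal.ofReal_mul (by positivity),
      ← ENNReal.ofReal_natCast, ← ENNReal.ofReal_mul (by positivity)]
    apply ENNReal.ofReal_le_ofReal
    rw [hδ]
    rcases Nat.eq_zero_or_pos G.edgeFinset.card with h0 | h0
    · rw [h0]; simp; exact hξ.le
    · have : (0 : ℝ) < G.edgeFinset.card := by exact_mod_cast h0
      apply le_of_eq
      field_simp
  calc ENNReal.ofReal (1 - ξ) = 1 - ENNReal.ofReal ξ := by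
        rw [ENNReal.ofReal_sub _ hξ.le, ENNReal.ofReal_one]
    _ ≤ 1 - MeasureTheory.Measure.pi μ U := tsub_le_tsub_left hUle 1
    _ = MeasureTheory.Measure.pi μ Uᶜ := (MeasureTheory.prob_compl_eq_one_sub hUm).symm
    _ ≤ _ := by
      apply MeasureTheory.measure_mono
      intro ω hω Ms hMs hmax M hM hne
      by_contra hlt
      push Not at hlt
      apply hω
      rw [hU, Set.mem_iUnion]
      have hex : ∃ e, (e ∈ Ms ∧ e ∉ M) ∨ (e ∈ M ∧ e ∉ Ms) := by
        by_contra hno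
        push Not at hno
        exact hne (Finset.ext fun e => ⟨(hno e).2, (hno e).1⟩)
      obtain ⟨e, ⟨h1, h2⟩ | ⟨h1, h2⟩⟩ := hex
      · exact ⟨⟨e, hMs.1 h1⟩, hf ⟨e, hMs.1 h1⟩ ω δ Ms M hMs hM h1 h2 (Or.inl ⟨hmax, hlt⟩)⟩
      · exact ⟨⟨e, hM.1 h1⟩, hf ⟨e, hM.1 h1⟩ ω δ M Ms hM hMs h1 h2 (Or.inr ⟨hmax, hlt⟩)⟩
end EN
end
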